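/- Let n > m ≥ 1 with m ≤ ⌊n/2⌋, suppose the trinomial p = X^n + X^m + 1 ∈ (ZMod 2)[X] is irreducible, and let F = (ZMod 2)[X]/(p) with power basis 1, x, …, x^{n−1}. Let M be the matrix of the F₂-linear squaring map a ↦ a² with respect to this basis. Then the support of M can be partitioned into at most m + 1 partial matchings, i.e. subsets in which no two distinct index pairs share a first coordinate or a second coordinate. -/

import Mathlib

/-!
Write `p = Xⁿ + Xᵐ + 1`. Reducing `x^{2i}` modulo `p` gives `x^{2i}` if `2i < n`; otherwise, with
`k = 2i - n`, it gives `x^k + x^{k+m}` if `k + m < n`, and `x^k + x^l + x^{l+m}` with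
`l = k + m - n` if `k + m ≥ n` (here `l + m < n` because `2m ≤ n`). So the support of `M` lies in
the union of five partial matchings (`sq_support`):
* A: `j = 2i`, where `2i < n`;
* B: `j = 2i - n`, where `2i ≥ n`;
* C: `j = 2i - n + m`, where `n ≤ 2i < 2n - m`;
* D: `j = 2i - 2n + m`, where `2i ≥ 2n - m`;
* E: `j = 2i - 2n + 2m`, where `2i ≥ 2n - m`.

Irreducibility enters only to exclude that `n` and `m` are both even, in which case `p` is a
square (`not_both_even`). Under this restriction three colours suffice: B gets `0`, C and D get
`1`, E gets `2`, and A gets `1` or `0` according as `n` is even or odd. Parity and range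
considerations show that no two classes of the same colour share a row or a column. The colour `2`
is only used when `m ≥ 2`, since E is empty for `m = 1`; hence `m + 1` colours are enough.
-/

open Polynomial

lemma not_both_even (n m : ℕ)
    (hirr : Irreducible (X ^ n + X ^ m + 1 : Polynomial (ZMod 2))) :
    ¬ (n % 2 = 0 ∧ m % 2 = 0) := by
  rintro ⟨hn, hm⟩
  obtain ⟨a, rfl⟩ : ∃ a, n = 2 * a := ⟨n / 2, by omega⟩
  obtain ⟨b, rfl⟩ : ∃ b, m = 2 * b := ⟨m / 2, by omega⟩
  refine hirr.not_isSquare ⟨X ^ a + X ^ b + 1, ?_⟩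
  have h2 : (2 : Polynomial (ZMod 2)) = 0 := CharTwo.two_eq_zero
  linear_combination (-(X ^ a * X ^ b + X ^ a + X ^ b)) * h2

lemma trinomial_degree (n m : ℕ) (hm : 1 ≤ m) (hmn : m < n) :
    (X ^ n + X ^ m + 1 : Polynomial (ZMod 2)).degree = n := by
  have : (X ^ m + 1 : Polynomial (ZMod 2)).degree < n := by
    have := degree_X_pow_add_C (R := ZMod 2) (n := m) (by omega) 1
    rw [map_one] at this
    rw [this]
    exact_mod_cast hmn
  rw [add_assoc, degree_add_eq_left_of_degree_lt] <;> rw [degree_X_pow]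
  exact this

/-- Coordinates with respect to the power basis are the coefficients of the reduced
representative: `q` has degree below `n` and represents `x^e`. -/
lemma coord_eq_coeff (n m : ℕ) (hm : 1 ≤ m) (hmn : m < n) (c : Fin n → ZMod 2) (e : ℕ)
    (q : Polynomial (ZMod 2)) (hq : q.degree < n)
    (hdvd : (X ^ n + X ^ m + 1 : Polynomial (ZMod 2)) ∣ X ^ e - q)
    (h : AdjoinRoot.root (X ^ n + X ^ m + 1 : Polynomial (ZMod 2)) ^ e
        = ∑ j : Fin n, c j •
            AdjoinRoot.root (X ^ n + X ^ m + 1 : Polynomial (ZMod 2)) ^ (j : ℕ))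
    (j : Fin n) : c j = q.coeff j := by
  set p : Polynomial (ZMod 2) := X ^ n + X ^ m + 1 with hp
  have h1 : AdjoinRoot.mk p (X ^ e) = AdjoinRoot.mk p (∑ j : Fin n, C (c j) * X ^ (j : ℕ)) := by
    rw [map_pow, AdjoinRoot.mk_X, h, map_sum]
    refine Finset.sum_congr rfl fun j _ => ?_
    rw [map_mul, map_pow, AdjoinRoot.mk_X, AdjoinRoot.mk_C, Algebra.smul_def]
    rfl
  rw [AdjoinRoot.mk_eq_mk] at h1
  have h2 : p ∣ q - ∑ j : Fin n, C (c j) * X ^ (j : ℕ) := by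
    have := dvd_sub h1 hdvd
    rwa [sub_sub_sub_cancel_left] at this
  have hs := degree_sum_fin_lt c
  have h3 := eq_zero_of_dvd_of_degree_lt h2 (by
    rw [hp, trinomial_degree n m hm hmn]
    exact lt_of_le_of_lt (degree_sub_le _ _) (max_lt hq hs))
  rw [sub_eq_zero.1 h3, finsetSum_coeff]
  simp [coeff_C_mul, coeff_X_pow, Fin.val_inj]

lemma degree_X_pow_lt (n k : ℕ) (h : k < n) : (X ^ k : Polynomial (ZMod 2)).degree < n := by
  rw [degree_X_pow]
  exact_mod_cast h

/-- The support of row `i` of the squaring matrix lies in the five matchings A, B, C, D, E; the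
equations are written without subtraction. -/
lemma sq_support (n m : ℕ) (hm : 1 ≤ m) (hmn : m < n) (hm2 : m ≤ n / 2) (i : ℕ) (hi : i < n)
    (c : Fin n → ZMod 2)
    (h : AdjoinRoot.root (X ^ n + X ^ m + 1 : Polynomial (ZMod 2)) ^ (2 * i)
        = ∑ j : Fin n, c j •
            AdjoinRoot.root (X ^ n + X ^ m + 1 : Polynomial (ZMod 2)) ^ (j : ℕ))
    (j : Fin n) (hj : c j ≠ 0) :
    (2 * i < n ∧ (j : ℕ) = 2 * i) ∨
    (n ≤ 2 * i ∧ (j : ℕ) + n = 2 * i) ∨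
    (n ≤ 2 * i ∧ 2 * i + m < 2 * n ∧ (j : ℕ) + n = 2 * i + m) ∨
    (2 * n ≤ 2 * i + m ∧ (j : ℕ) + 2 * n = 2 * i + m) ∨
    (2 * n ≤ 2 * i + m ∧ (j : ℕ) + 2 * n = 2 * i + 2 * m) := by
  have h2 : (2 : Polynomial (ZMod 2)) = 0 := CharTwo.two_eq_zero
  have deg_add {a b : Polynomial (ZMod 2)} (ha : a.degree < n) (hb : b.degree < n) :
      (a + b).degree < n := lt_of_le_of_lt (degree_add_le _ _) (max_lt ha hb)
  rcases lt_or_ge (2 * i) n with h1 | h1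
  · rw [coord_eq_coeff n m hm hmn c (2 * i) (X ^ (2 * i)) (degree_X_pow_lt _ _ h1)
      (by simp) h j, coeff_X_pow] at hj
    have : (j : ℕ) = 2 * i := by by_contra hne; simp [hne] at hj
    omega
  obtain ⟨k, hk⟩ := Nat.exists_eq_add_of_le h1
  rw [hk] at h
  rcases lt_or_ge (k + m) n with h3 | h3
  · rw [coord_eq_coeff n m hm hmn c (n + k) (X ^ k + X ^ (k + m))
      (deg_add (degree_X_pow_lt _ _ (by omega)) (degree_X_pow_lt _ _ h3))
      ⟨X ^ k, by linear_combination (-(X ^ k + X ^ (k + m))) * h2⟩ h j,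
      coeff_add, coeff_X_pow, coeff_X_pow] at hj
    have : (j : ℕ) = k ∨ (j : ℕ) = k + m := by
      by_contra! hne
      simp [hne.1, hne.2] at hj
    omega
  · obtain ⟨l, hl⟩ := Nat.exists_eq_add_of_le h3
    have hX : (X ^ k * X ^ m : Polynomial (ZMod 2)) = X ^ n * X ^ l := by
      rw [← pow_add, ← pow_add, hl]
    rw [coord_eq_coeff n m hm hmn c (n + k) (X ^ k + X ^ l + X ^ (l + m))
      (deg_add (deg_add (degree_X_pow_lt _ _ (by omega)) (degree_X_pow_lt _ _ (by omega)))
        (degree_X_pow_lt _ _ (by omega)))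
      ⟨X ^ k + X ^ l, by
        linear_combination (-(X ^ k + X ^ l + X ^ (l + m) + X ^ n * X ^ l)) * h2 - hX⟩ h j,
      coeff_add, coeff_add, coeff_X_pow, coeff_X_pow, coeff_X_pow] at hj
    have : (j : ℕ) = k ∨ (j : ℕ) = l ∨ (j : ℕ) = l + m := by
      by_contra! hne
      simp [hne.1, hne.2.1, hne.2.2] at hj
    omega

/-- The colouring of the five matchings: A gets `1` or `0` by the parity of `n`, B gets `0`, C and
D get `1`, and E gets `2`. When `n = 2m` the positions of B and E with `2i ≥ 2n - m` coincide
and get `0`. -/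
def sqColor (n m i j : ℕ) : ℕ :=
  if 2 * i < n then (if n % 2 = 0 then 1 else 0)
  else if j + n = 2 * i then 0
  else if j + n = 2 * i + m ∨ j + 2 * n = 2 * i + m then 1
  else 2

/-- In `F = F₂[X]/(Xⁿ + Xᵐ + 1)` (with `1 ≤ m ≤ ⌊n/2⌋`), the support of the matrix `M` of
the `F₂`-linear squaring map with respect to the power basis `1, x, …, x^{n-1}` can be
partitioned into at most `m + 1` partial matchings (i.e. squaring has an ancilla-free
CNOT circuit of depth at most `m + 1`). -/
theorem stmt_5 (n m : ℕ) (hm : 1 ≤ m) (hmn : m < n) (hm2 : m ≤ n / 2)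
    (hirr : Irreducible (X ^ n + X ^ m + 1 : Polynomial (ZMod 2)))
    (M : Matrix (Fin n) (Fin n) (ZMod 2))
    (hM : ∀ i : Fin n,
      (AdjoinRoot.root (X ^ n + X ^ m + 1 : Polynomial (ZMod 2)) ^ (i : ℕ)) ^ 2
        = ∑ j : Fin n, M i j •
            AdjoinRoot.root (X ^ n + X ^ m + 1 : Polynomial (ZMod 2)) ^ (j : ℕ)) :
    ∃ color : Fin n × Fin n → ℕ,
      (∀ p : Fin n × Fin n, M p.1 p.2 ≠ 0 → color p < m + 1) ∧
      (∀ p q : Fin n × Fin n, M p.1 p.2 ≠ 0 → M q.1 q.2 ≠ 0 → p ≠ q → color p = color q →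
        p.1 ≠ q.1 ∧ p.2 ≠ q.2) := by
  have hpar := not_both_even n m hirr
  have hsupp (i j : Fin n) (hij : M i j ≠ 0) :=
    sq_support n m hm hmn hm2 i i.2 (M i) (by rw [← hM i, ← pow_mul, mul_comm]) j hij
  refine ⟨fun p => sqColor n m p.1 p.2, ?_, ?_⟩
  · rintro ⟨i, j⟩ hij
    have := hsupp i j hij
    have := i.2
    simp only [sqColor]
    split_ifs <;> omega
  · rintro ⟨i, j⟩ ⟨i', j'⟩ hij hij' hne hc
    have h1 := hsupp i j hij
    have h2 := hsupp i' j' hij'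
    have hi := i.2
    have hi' := i'.2
    have hne' : ¬ ((i : ℕ) = i' ∧ (j : ℕ) = j') := by
      rintro ⟨ha, hb⟩
      exact hne (Prod.ext (Fin.ext ha) (Fin.ext hb))
    simp only [ne_eq, Fin.ext_iff]
    simp only [sqColor] at hc
    constructor
    · intro he
      split_ifs at hc <;> omega
    · intro he
      split_ifs at hc <;> omega
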